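/- Let ρ : Fin r → Equiv.Perm (Fin n) be an sggi which is independent, such that G_{r−1} (the subgroup generated by all ρ l with l ≠ r−1) is intransitive, and such that G_j is transitive for some index j with j ∉ {0, r−1}. Let j be the largest such index, i.e. G_j is transitive and G_l is intransitive for every l with j < l ≤ r−2. Suppose every orbit of the subgroup G_{<j} generated by {ρ_0, …, ρ_{j−1}} on Fin n has exactly k elements, and set m = n / k. Then every element of G_j maps each G_{<j}-orbit onto a G_{<j}-orbit, and r − 1 ≤ (k − 1) + (m − 1). -/

import Mathlib

/-- A string group generated by involutions (sggi): each generator has order 2 and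
nonconsecutive generators commute. -/
def IsSggi {n r : ℕ} (ρ : Fin r → Equiv.Perm (Fin n)) : Prop :=
  (∀ i, orderOf (ρ i) = 2) ∧
  ∀ i j : Fin r, 1 < |((i : ℕ) : ℤ) - ((j : ℕ) : ℤ)| → (ρ i * ρ j) ^ 2 = 1

/-- The generating family is independent: no generator lies in the subgroup generated
by the others. -/
def IsIndependent {n r : ℕ} (ρ : Fin r → Equiv.Perm (Fin n)) : Prop :=
  ∀ i, ρ i ∉ Subgroup.closure (ρ '' {j | j ≠ i})

/-! The groups `G_{<j}` and `G_{>j}` commute and together generate the transitive group `G_j`. Hence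
`G_{<j}` is normal in `G_j` and acts faithfully on each of its orbits, so its rank is less than `k`
by the rank bound: an independent string generating a faithful transitive group of degree `n` has
rank less than `n`. By maximality of `j`, each generator after `j` merges orbits when it is added to
`G_{<j}` and the preceding ones, so there are fewer than `m` of them.

The rank bound is by induction on the degree. The generators before and after a given `i` generate
two commuting groups, the sides of `i`. If they are both intransitive but together transitive for
some `i`, apply induction to an orbit of each. If they are both transitive for some `i`, they are
regular, so each has order `n`, which is at least two to the power of its rank. Otherwise, a
generator whose deletion preserves transitivity has exactly one transitive side. Those with
transitive upper side, all but the largest of them, generate a semiregular group, being centralized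
by a transitive one, and likewise on the other side. Such a group has order exponential in its rank
and hence few orbits, while each generator whose deletion destroys transitivity still has to merge
orbits. -/

open MulAction Subgroup
open scoped Pointwise

section Orbits

variable {G α : Type*} [Group G] [MulAction G α] {H K L : Subgroup G}

/-- The number of orbits of the subgroup `H` on `α`. -/
noncomputable def orbitCount (H : Subgroup G) (α : Type*) [MulAction G α] : ℕ :=
  Nat.card (orbitRel.Quotient H α)

lemma orbitRel_closure_le_iff {s : Set G} {e : Setoid α} :
    orbitRel (closure s) α ≤ e ↔ ∀ g ∈ s, ∀ x, e (g • x) x := by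
  refine ⟨fun h g hg x => h ⟨⟨g, subset_closure hg⟩, rfl⟩, ?_⟩
  rintro h _ y ⟨⟨g, hg⟩, rfl⟩
  change e (g • y) y
  induction hg using closure_induction generalizing y with
  | mem g hg => exact h g hg y
  | one => rw [one_smul]
  | mul a b _ _ iha ihb => exact mul_smul a b y ▸ e.trans' (@iha _) (@ihb _)
  | inv a _ ih => exact e.symm (by simpa using ih (y := a⁻¹ • y))

lemma orbitRel_mono (h : H ≤ K) : orbitRel H α ≤ orbitRel K α := by
  rintro _ y ⟨g, rfl⟩
  exact ⟨⟨g, h g.2⟩, rfl⟩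

lemma isPretransitive_iff_orbitRel_eq_top : IsPretransitive H α ↔ orbitRel H α = ⊤ := by
  rw [Setoid.eq_top_iff]
  exact ⟨fun _ x y => exists_smul_eq H y x, fun h => ⟨fun x y => h y x⟩⟩

lemma isPretransitive_mono (h : H ≤ K) (hH : IsPretransitive H α) : IsPretransitive K α := by
  rw [isPretransitive_iff_orbitRel_eq_top] at hH ⊢
  exact top_le_iff.1 (hH ▸ orbitRel_mono h)

lemma orbitCount_eq_one_iff [Nonempty α] : orbitCount H α = 1 ↔ IsPretransitive H α := by
  rw [pretransitive_iff_unique_quotient_of_nonempty, orbitCount, Nat.card_eq_one_iff_unique,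
    unique_iff_subsingleton_and_nonempty]

section Counting

variable [Finite α]

lemma orbitCount_anti (h : H ≤ K) : orbitCount K α ≤ orbitCount H α :=
  Nat.card_le_card_of_surjective (Quotient.map id (orbitRel_mono h))
    (Quotient.map_surjective (orbitRel_mono h) Function.surjective_id)

lemma orbitCount_le_card (H : Subgroup G) : orbitCount H α ≤ Nat.card α :=
  Nat.card_le_card_of_surjective _ Quotient.mk_surjective

lemma orbitRel_eq_of_orbitCount_le (h : H ≤ K) (hc : orbitCount H α ≤ orbitCount K α) :
    orbitRel H α = orbitRel K α := by
  have hsurj := Quotient.map_surjective (orbitRel_mono (α := α) h) Function.surjective_id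
  have hinj := (hsurj.bijective_of_nat_card_le hc).injective
  exact le_antisymm (orbitRel_mono h) fun x y hxy =>
    Quotient.exact (hinj (a₁ := ⟦x⟧) (a₂ := ⟦y⟧) (Quotient.sound hxy))

lemma eq_bot_of_card_le_orbitCount [FaithfulSMul G α] (h : Nat.card α ≤ orbitCount H α) :
    H = ⊥ := by
  have hinj := (Quotient.mk_surjective (s := orbitRel H α)).bijective_of_nat_card_le h |>.1
  refine (Subgroup.eq_bot_iff_forall _).2 fun g hg => ?_
  refine FaithfulSMul.eq_of_smul_eq_smul fun x : α => ?_
  rw [one_smul]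
  exact hinj (Quotient.sound ⟨⟨g, hg⟩, rfl⟩)

lemma orbitCount_pos [Nonempty α] (H : Subgroup G) : 0 < orbitCount H α :=
  haveI : Nonempty (orbitRel.Quotient H α) := ‹Nonempty α›.map Quotient.mk''
  Nat.card_pos

lemma two_le_orbitCount [Nonempty α] (hH : ¬ IsPretransitive H α) : 2 ≤ orbitCount H α := by
  have := mt orbitCount_eq_one_iff.1 hH
  have := orbitCount_pos (α := α) H
  omega

lemma mul_orbitCount_eq_card {k : ℕ} (h : ∀ x : α, (orbit H x).ncard = k) :
    k * orbitCount H α = Nat.card α := by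
  have := Fintype.ofFinite (orbitRel.Quotient H α)
  rw [Nat.card_congr (selfEquivSigmaOrbits H α), Nat.card_sigma,
    Finset.sum_congr rfl fun ω _ => (Nat.card_coe_set_eq _).trans (h ω.out)]
  simp [orbitCount, mul_comm]

end Counting

lemma image_orbit_of_mem_normalizer {g : G} (hg : g ∈ normalizer (H : Set G)) (x : α) :
    (g • ·) '' orbit H x = orbit H (g • x) := by
  ext y
  constructor
  · rintro ⟨_, ⟨h, rfl⟩, rfl⟩
    exact ⟨⟨_, (mem_normalizer_iff.1 hg h).1 h.2⟩, by simp [Subgroup.smul_def, mul_smul]⟩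
  · rintro ⟨h, rfl⟩
    exact ⟨_, ⟨⟨_, (mem_normalizer_iff''.1 hg h).1 h.2⟩, rfl⟩,
      by simp [Subgroup.smul_def, mul_smul]⟩

lemma two_mul_ncard_orbit_le [Finite α] (hL : L ≤ normalizer (H : Set G))
    (hLt : IsPretransitive L α) (hH : ¬ IsPretransitive H α) (x : α) :
    2 * (orbit H x).ncard ≤ Nat.card α := by
  obtain ⟨y, hy⟩ : ∃ y, y ∉ orbit H x := by
    by_contra! hall
    exact hH (.of_orbit hall)
  obtain ⟨g, rfl⟩ := exists_smul_eq L x y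
  have hcard : (orbit H (g • x)).ncard = (orbit H x).ncard := by
    rw [← Set.ncard_image_of_injective (orbit H x) (MulAction.injective (g : G)),
      image_orbit_of_mem_normalizer (hL g.2)]
    rfl
  have hdisj : Disjoint (orbit H x) (orbit H (g • x)) :=
    (orbit.eq_or_disjoint x (g • x)).resolve_left fun h => hy (h ▸ mem_orbit_self _)
  calc 2 * (orbit H x).ncard = (orbit H x ∪ orbit H (g • x)).ncard := by
        rw [Set.ncard_union_eq hdisj, hcard, two_mul]
    _ ≤ Nat.card α := Set.ncard_le_card _

lemma eq_or_eq_smul_of_card_le_four [Finite α] (hα : Nat.card α ≤ 4) {a : G} (haa : a * a = 1)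
    (hfix : ∀ z : α, a • z ≠ z) {x y : α} (hyx : y ≠ x) (hyax : y ≠ a • x) (z : α) :
    z = x ∨ z = a • x ∨ z = y ∨ z = a • y := by
  have := Fintype.ofFinite α
  have invol (z : α) : a • a • z = z := by rw [← mul_smul, haa, one_smul]
  have hxay : x ≠ a • y := fun e => hyax (by rw [e, invol])
  have haxay : a • x ≠ a • y := (MulAction.injective a).ne hyx.symm
  by_contra! hz
  have nodup : [z, x, a • x, y, a • y].Nodup := by
    simp [hz, (hfix _).symm, hyx.symm, hyax.symm, hxay, haxay]
  have := nodup.length_le_card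
  rw [← Nat.card_eq_fintype_card] at this
  exact absurd (this.trans hα) (by simp)

end Orbits

section Centralizer

variable {G α : Type*} [Group G] [MulAction G α] {H K : Subgroup G}

lemma smul_smul_comm_of_mem_centralizer {a k : G} (ha : a ∈ centralizer (K : Set G)) (hk : k ∈ K)
    (x : α) : k • a • x = a • k • x := by
  rw [← mul_smul, mem_centralizer_iff.1 ha k hk, mul_smul]

lemma sup_le_normalizer_of_le_centralizer (h : H ≤ centralizer (K : Set G)) :
    H ⊔ K ≤ normalizer (H : Set G) :=
  sup_le le_normalizer ((le_centralizer_iff.1 h).trans (centralizer_le_normalizer _))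

variable [FaithfulSMul G α]

lemma faithfulSMul_orbit (h : H ≤ centralizer (K : Set G)) (ht : IsPretransitive ↥(H ⊔ K) α)
    (x : α) : FaithfulSMul H (orbit H x) where
  eq_of_smul_eq_smul {a b} hab := by
    refine Subtype.ext (FaithfulSMul.eq_of_smul_eq_smul fun y : α => ?_)
    obtain ⟨⟨g, hg⟩, rfl⟩ := exists_smul_eq ↥(H ⊔ K) x y
    obtain ⟨k, hk, c, hc, rfl⟩ : g ∈ (K : Set G) * (H : Set G) := by
      rwa [← coe_mul_of_left_le_normalizer_right K H
        (le_sup_right.trans (sup_le_normalizer_of_le_centralizer h)), sup_comm]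
    have hx : (a : G) • c • x = (b : G) • c • x :=
      congrArg Subtype.val (hab ⟨c • x, ⟨c, hc⟩, rfl⟩)
    change (a : G) • (k * c) • x = (b : G) • (k * c) • x
    rw [mul_smul, ← smul_smul_comm_of_mem_centralizer (h a.2) hk, hx,
      smul_smul_comm_of_mem_centralizer (h b.2) hk]

lemma eq_of_smul_eq_of_mem_centralizer (hK : IsPretransitive K α) {a b : G}
    (ha : a ∈ centralizer (K : Set G)) (hb : b ∈ centralizer (K : Set G)) {x : α}
    (hx : a • x = b • x) : a = b := by
  refine FaithfulSMul.eq_of_smul_eq_smul fun y : α => ?_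
  obtain ⟨⟨k, hk⟩, rfl⟩ := exists_smul_eq K x y
  change a • k • x = b • k • x
  rw [← smul_smul_comm_of_mem_centralizer ha hk, hx, smul_smul_comm_of_mem_centralizer hb hk]

lemma card_mul_orbitCount_of_le_centralizer (hK : IsPretransitive K α)
    (h : H ≤ centralizer (K : Set G)) : Nat.card H * orbitCount H α = Nat.card α := by
  have hstab (x : α) : stabilizer H x = ⊥ := by
    refine (Subgroup.eq_bot_iff_forall _).2 fun g hg => Subtype.ext ?_
    refine eq_of_smul_eq_of_mem_centralizer hK (h g.2) (one_mem _) (x := x) ?_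
    exact hg.trans (one_smul G x).symm
  rw [Nat.card_congr (selfEquivOrbitsQuotientProd hstab), Nat.card_prod, mul_comm]
  rfl

lemma mem_of_mem_centralizer_of_smul_eq_of_cover (hK : IsPretransitive K α) {a g : G}
    (ha : a ∈ centralizer (K : Set G)) (haa : a * a = 1) {x y : α} (hyx : y ≠ x)
    (hyax : y ≠ a • x) (cover : ∀ z, z = x ∨ z = a • x ∨ z = y ∨ z = a • y) (hg : g ∈ K)
    (hgx : g • x = a • x) (hgy : g • y = y) : a ∈ K := by
  have comm {k : G} (hk : k ∈ K) (z : α) : k • a • z = a • k • z :=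
    smul_smul_comm_of_mem_centralizer ha hk z
  obtain ⟨⟨h, hh⟩, hhx : h • x = y⟩ := exists_smul_eq K x y
  have hghx : g • h⁻¹ • x = h⁻¹ • x := by
    rcases cover (h⁻¹ • x) with e | e | e | e
    · exact (hyx (by rw [← hhx, ← inv_smul_eq_iff.1 e])).elim
    · rw [inv_smul_eq_iff, comm hh, hhx] at e
      exact (hyax (by rw [e, ← mul_smul, haa, one_smul])).elim
    · rw [e, hgy]
    · rw [e, comm hg, hgy]
  -- On `{x, a • x}` only the factor `g` moves points, on `{y, a • y}` only `h * g * h⁻¹` does.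
  have hb : g * (h * g * h⁻¹) ∈ K := mul_mem hg (mul_mem (mul_mem hh hg) (inv_mem hh))
  have hbx : (g * (h * g * h⁻¹)) • x = a • x := by
    rw [mul_smul, mul_smul, mul_smul, hghx, smul_inv_smul, hgx]
  have hby : (g * (h * g * h⁻¹)) • y = a • y := by
    rw [mul_smul, mul_smul, mul_smul, ← hhx, inv_smul_smul, hgx, comm hh, hhx, comm hg, hgy]
  suffices ∀ z : α, (g * (h * g * h⁻¹)) • z = a • z from FaithfulSMul.eq_of_smul_eq_smul this ▸ hb
  intro z
  rcases cover z with rfl | rfl | rfl | rfl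
  · exact hbx
  · rw [comm hb, hbx]
  · exact hby
  · rw [comm hb, hby]

lemma mem_of_mem_centralizer_of_card_le_four [Finite α] [Nonempty α] (hK : IsPretransitive K α)
    (hα : Nat.card α ≤ 4) {a : G} (ha : a ∈ centralizer (K : Set G)) (haa : a * a = 1) :
    a ∈ K := by
  by_cases hfix : ∃ z : α, a • z = z
  · obtain ⟨z, hz⟩ := hfix
    exact eq_of_smul_eq_of_mem_centralizer hK ha (one_mem _) (hz.trans (one_smul G z).symm) ▸
      one_mem K
  obtain ⟨x⟩ := ‹Nonempty α›
  obtain ⟨⟨g, hg⟩, hgx : g • x = a • x⟩ := exists_smul_eq K x (a • x)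
  by_cases hga : ∀ y : α, g • y = a • y
  · exact FaithfulSMul.eq_of_smul_eq_smul hga ▸ hg
  push Not at hga
  obtain ⟨y, hy⟩ := hga
  have hgax : g • a • x = x := by
    rw [smul_smul_comm_of_mem_centralizer ha hg, hgx, ← mul_smul, haa, one_smul]
  have hyx : y ≠ x := by rintro rfl; exact hy hgx
  have hyax : y ≠ a • x := by
    rintro rfl; exact hy (by rw [hgax, ← mul_smul, haa, one_smul])
  have cover := eq_or_eq_smul_of_card_le_four hα haa (not_exists.1 hfix) hyx hyax
  refine mem_of_mem_centralizer_of_smul_eq_of_cover hK ha haa hyx hyax cover hg hgx ?_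
  rcases cover (g • y) with e | e | e | e
  · exact (hyax (MulAction.injective g (e.trans hgax.symm))).elim
  · exact (hyx (MulAction.injective g (e.trans hgx.symm))).elim
  · exact e
  · exact (hy e).elim

end Centralizer

lemma two_mul_add_two_le_of_two_pow_le {u n : ℕ} (hn : 6 ≤ n) (hu : 2 ^ u ≤ n) :
    2 * u + 2 ≤ n := by
  rcases u with _ | _ | _ | u
  iterate 3 omega
  have := u.lt_two_pow_self
  rw [pow_add] at hu
  omega

lemma add_two_le_of_two_pow_le {u n : ℕ} (hn : 3 ≤ n) (hu : 2 ^ u ≤ n) : u + 2 ≤ n := by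
  rcases u with _ | _ | u
  iterate 2 omega
  have := u.lt_two_pow_self
  rw [pow_add] at hu
  omega

lemma add_add_two_add_le_mul {u v p x z : ℕ} (hp : 3 ≤ p) (hu : 2 ^ u ≤ p) (hv : 2 ^ v ≤ p)
    (hx : 2 ≤ x) (hz : z ≤ x) : u + v + 2 + z ≤ p * x := by
  have hu' := add_two_le_of_two_pow_le hp hu
  have hv' := add_two_le_of_two_pow_le hp hv
  obtain ⟨p, rfl⟩ := Nat.exists_eq_add_of_le hp
  obtain ⟨x, rfl⟩ := Nat.exists_eq_add_of_le hx
  nlinarith [Nat.zero_le (p * x)]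

lemma card_filter_lt_add_card_filter_gt_add_one {ι : Type*} [LinearOrder ι] {I : Finset ι}
    {i : ι} (hi : i ∈ I) :
    (I.filter (· < i)).card + (I.filter (i < ·)).card + 1 = I.card := by
  rw [← Finset.card_union_of_disjoint, ← Finset.card_erase_add_one hi]
  · congr 2
    ext l
    simp only [Finset.mem_union, Finset.mem_filter, Finset.mem_erase, ne_iff_lt_or_gt]
    tauto
  · exact Finset.disjoint_filter.2 fun l _ hl hl' => hl.not_gt hl'

lemma inter_Iio_union_inter_Ioi {ι : Type*} [LinearOrder ι] (I : Set ι) (i : ι) :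
    I ∩ Set.Iio i ∪ I ∩ Set.Ioi i = I \ {i} := by
  rw [← Set.inter_union_distrib_left, Set.Iio_union_Ioi, Set.sdiff_eq]

section Parabolic

variable {ι G α : Type*} [Group G] [MulAction G α] {ρ : ι → G} {S T : Set ι} {i j : ι}

/-- The subgroup `G_J` generated by the `ρ j` with `j ∈ J`. -/
abbrev parabolic (ρ : ι → G) (J : Set ι) : Subgroup G :=
  closure (ρ '' J)

lemma mem_parabolic (hi : i ∈ S) : ρ i ∈ parabolic ρ S :=
  subset_closure (Set.mem_image_of_mem ρ hi)

lemma parabolic_mono (h : S ⊆ T) : parabolic ρ S ≤ parabolic ρ T :=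
  Subgroup.closure_mono (Set.image_mono h)

lemma parabolic_union (ρ : ι → G) (S T : Set ι) :
    parabolic ρ (S ∪ T) = parabolic ρ S ⊔ parabolic ρ T := by
  rw [parabolic, Set.image_union, Subgroup.closure_union]

lemma parabolic_empty (ρ : ι → G) : parabolic ρ ∅ = ⊥ := by
  rw [parabolic, Set.image_empty, Subgroup.closure_empty]

lemma orbitRel_parabolic_le_iff {e : Setoid α} :
    orbitRel (parabolic ρ S) α ≤ e ↔ ∀ i ∈ S, ∀ x, e (ρ i • x) x :=
  orbitRel_closure_le_iff.trans Set.forall_mem_image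

lemma orbitRel_parabolic_smul (hi : i ∈ S) (x : α) : orbitRel (parabolic ρ S) α (ρ i • x) x :=
  orbitRel_parabolic_le_iff.1 le_rfl i hi x

lemma orbitCount_parabolic_insert_lt [Finite α] (hST : S ⊆ T)
    (ht : IsPretransitive (parabolic ρ (insert i T)) α)
    (hT : ¬ IsPretransitive (parabolic ρ T) α) :
    orbitCount (parabolic ρ (insert i S)) α < orbitCount (parabolic ρ S) α := by
  by_contra! hle
  have heq := orbitRel_eq_of_orbitCount_le (parabolic_mono (Set.subset_insert i S)) hle
  have hrel : orbitRel (parabolic ρ S) α ≤ orbitRel (parabolic ρ T) α :=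
    orbitRel_mono (parabolic_mono hST)
  rw [isPretransitive_iff_orbitRel_eq_top] at ht hT
  refine hT (top_le_iff.1 (ht ▸ orbitRel_parabolic_le_iff.2 ?_))
  rintro l (rfl | hl) x
  · exact hrel (heq ▸ orbitRel_parabolic_smul (Set.mem_insert l S) x)
  · exact orbitRel_parabolic_smul hl x

lemma card_lt_orbitCount_parabolic [Finite α] [Nonempty α] {F : Finset ι}
    (ht : IsPretransitive (parabolic ρ (S ∪ F)) α)
    (hF : ∀ i ∈ F, ¬ IsPretransitive (parabolic ρ (S ∪ (F \ {i}))) α) :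
    F.card < orbitCount (parabolic ρ S) α := by
  classical
  induction F using Finset.induction_on generalizing S with
  | empty => exact orbitCount_pos _
  | insert i F hi ih =>
    have hdrop : orbitCount (parabolic ρ (insert i S)) α < orbitCount (parabolic ρ S) α := by
      refine orbitCount_parabolic_insert_lt (T := S ∪ F) Set.subset_union_left ?_ ?_
      · rwa [← Set.union_insert, ← Finset.coe_insert]
      · have hFi : ↑(insert i F) \ {i} = (F : Set ι) := by simp [hi]
        exact hFi ▸ hF i (Finset.mem_insert_self i F)
    have hins : F.card < orbitCount (parabolic ρ (insert i S)) α := by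
      refine ih ?_ fun l hl htl => hF l (Finset.mem_insert_of_mem hl) ?_
      · rwa [Set.insert_union, ← Set.union_insert, ← Finset.coe_insert]
      · refine isPretransitive_mono (parabolic_mono ?_) htl
        rintro a ((rfl | ha) | ha)
        · exact Or.inr ⟨Finset.mem_insert_self a F, fun e : a = l => hi (e ▸ hl)⟩
        · exact Or.inl ha
        · exact Or.inr ⟨Finset.mem_insert_of_mem ha.1, ha.2⟩
    rw [Finset.card_insert_of_notMem hi]
    omega

lemma not_isPretransitive_parabolic_empty [Nontrivial α] :
    ¬ IsPretransitive (parabolic ρ ∅) α := by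
  rw [parabolic_empty]
  intro ht
  obtain ⟨x, y, hxy⟩ := exists_pair_ne α
  obtain ⟨g, rfl⟩ := exists_smul_eq (⊥ : Subgroup G) x y
  rw [Subsingleton.elim g 1, one_smul] at hxy
  exact hxy rfl

end Parabolic

/-- `P` is obtained from `D` by deleting at most one index, and generates an intransitive group
centralized by a transitive group generated by members of `ρ` outside `P`. A faithful action of the
group generated by `P` is then semiregular, so its order, which is exponential in the size of `P`,
times its number of orbits is the degree. -/
structure IsSemiregularCore {ι G : Type*} [Group G] (ρ : ι → G) (I : Set ι) (α : Type*)
    [MulAction G α] (D P : Finset ι) : Prop where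
  subset : P ⊆ D
  card_le : D.card ≤ P.card + 1
  not_isPretransitive : ¬ IsPretransitive (parabolic ρ P) α
  exists_centralizer : ∃ T ⊆ I, Disjoint (P : Set ι) T ∧ IsPretransitive (parabolic ρ T) α ∧
    parabolic ρ P ≤ centralizer (parabolic ρ T : Set G)

namespace IsSemiregularCore

variable {ι G α : Type*} [Group G] [MulAction G α] {ρ : ι → G} {I : Set ι}

lemma empty [Nontrivial α] (ht : IsPretransitive (parabolic ρ I) α) :
    IsSemiregularCore ρ I α ∅ ∅ where
  subset := subset_rfl
  card_le := Nat.zero_le _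
  not_isPretransitive := Finset.coe_empty (α := ι) ▸ not_isPretransitive_parabolic_empty
  exists_centralizer := ⟨I, subset_rfl, by simp, ht, by simp [parabolic_empty]⟩

lemma erase [DecidableEq ι] {D : Finset ι} {d : ι} {T : Set ι} (hTI : T ⊆ I)
    (hDT : Disjoint (↑(D.erase d) : Set ι) T) (ht : IsPretransitive (parabolic ρ T) α)
    (hcent : parabolic ρ ↑(D.erase d) ≤ centralizer (parabolic ρ T : Set G))
    (hnt : ¬ IsPretransitive (parabolic ρ ↑(D.erase d)) α) :
    IsSemiregularCore ρ I α D (D.erase d) where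
  subset := D.erase_subset d
  card_le := Nat.le_add_of_sub_le Finset.pred_card_le_card_erase
  not_isPretransitive := hnt
  exists_centralizer := ⟨T, hTI, hDT, ht, hcent⟩

lemma card_mul_orbitCount {D P : Finset ι} [FaithfulSMul G α]
    (hP : IsSemiregularCore ρ I α D P) :
    Nat.card (parabolic ρ P) * orbitCount (parabolic ρ P) α = Nat.card α :=
  let ⟨_, _, _, hT, hPT⟩ := hP.exists_centralizer
  card_mul_orbitCount_of_le_centralizer hT hPT

end IsSemiregularCore

/-- The family `ρ`, restricted to `I`, consists of involutions that commute unless they are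
consecutive in `I`, and none of them lies in the subgroup generated by the others: the string
property and independence of an sggi, for a subset of an arbitrary linearly ordered index set. -/
structure IsIndepString {ι G : Type*} [LinearOrder ι] [Group G] (ρ : ι → G) (I : Set ι) : Prop where
  mul_self : ∀ i ∈ I, ρ i * ρ i = 1
  commute : ∀ i ∈ I, ∀ l ∈ I, ∀ j ∈ I, i < l → l < j → Commute (ρ i) (ρ j)
  notMem : ∀ i ∈ I, ρ i ∉ parabolic ρ (I \ {i})

namespace IsIndepString

variable {ι G α : Type*} [LinearOrder ι] [Group G] [MulAction G α] {ρ : ι → G} {I : Set ι}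

lemma notMem_parabolic (h : IsIndepString ρ I) {S : Set ι} (hS : S ⊆ I) {i : ι} (hi : i ∈ I)
    (hiS : i ∉ S) : ρ i ∉ parabolic ρ S := fun hmem =>
  h.notMem i hi (parabolic_mono (Set.subset_sdiff_singleton hS hiS) hmem)

lemma ne_one (h : IsIndepString ρ I) {i : ι} (hi : i ∈ I) : ρ i ≠ 1 := fun e =>
  h.notMem i hi (e ▸ one_mem _)

lemma parabolic_le_centralizer (h : IsIndepString ρ I) {S T : Set ι} {i : ι} (hi : i ∈ I)
    (hS : S ⊆ I ∩ Set.Iio i) (hT : T ⊆ I ∩ Set.Ioi i) :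
    parabolic ρ S ≤ centralizer (parabolic ρ T : Set G) := by
  rw [parabolic, parabolic, centralizer_closure, closure_le]
  rintro _ ⟨s, hs, rfl⟩
  rw [SetLike.mem_coe, mem_centralizer_iff]
  rintro _ ⟨t, ht, rfl⟩
  exact (h.commute s (hS hs).1 i hi t (hT ht).1 (hS hs).2 (hT ht).2).symm

lemma two_pow_card_le [Finite G] {F : Finset ι} (h : IsIndepString ρ I) (hF : ↑F ⊆ I) :
    2 ^ F.card ≤ Nat.card (parabolic ρ F) := by
  induction F using Finset.induction_on with
  | empty => exact Nat.card_pos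
  | insert i F hi ih =>
    rw [Finset.coe_insert, Set.insert_subset_iff] at hF
    have hlt : parabolic ρ F < parabolic ρ (insert i F : Finset ι) :=
      SetLike.lt_iff_le_and_exists.2 ⟨parabolic_mono (by simp), ρ i, mem_parabolic (by simp),
        h.notMem_parabolic hF.2 hF.1 hi⟩
    obtain ⟨c, hc⟩ := Subgroup.card_dvd_of_le hlt.le
    have hc2 : 2 ≤ c := by
      by_contra! hc2
      refine hlt.ne (Subgroup.eq_of_le_of_card_ge hlt.le ?_)
      rw [hc]
      exact (Nat.mul_le_mul_left _ (Nat.le_of_lt_succ hc2)).trans_eq (mul_one _)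
    rw [Finset.card_insert_of_notMem hi, pow_succ, hc]
    exact Nat.mul_le_mul (ih hF.2) hc2

lemma orbitCount_singleton_lt [Finite α] [FaithfulSMul G α] (h : IsIndepString ρ I) {i : ι}
    (hi : i ∈ I) : orbitCount (parabolic ρ {i}) α < Nat.card α := by
  by_contra! hc
  exact h.ne_one hi (by simpa [parabolic] using eq_bot_of_card_le_orbitCount hc)

lemma smul_eq_of_orbitRel_singleton_eq (h : IsIndepString ρ I) {i j : ι} (hi : i ∈ I)
    (he : orbitRel (parabolic ρ {i}) α = orbitRel (parabolic ρ {j}) α) {x : α}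
    (hx : ρ j • x ≠ x) : ρ i • x = ρ j • x := by
  obtain ⟨⟨g, hg⟩, hgx : g • x = ρ j • x⟩ : orbitRel (parabolic ρ {i}) α (ρ j • x) x := by
    rw [he]
    exact orbitRel_parabolic_smul (Set.mem_singleton j) x
  rw [parabolic, Set.image_singleton, mem_closure_singleton] at hg
  obtain ⟨m, rfl⟩ := hg
  have hsq : ρ i ^ (2 : ℤ) = 1 := by rw [zpow_ofNat, pow_two, h.mul_self i hi]
  rcases Int.even_or_odd' m with ⟨c, rfl | rfl⟩
  · exact (hx (by rw [← hgx, zpow_mul, hsq, one_zpow, one_smul])).elim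
  · rwa [zpow_add, zpow_mul, hsq, one_zpow, one_mul, zpow_one] at hgx

lemma eq_of_orbitRel_singleton_eq [FaithfulSMul G α] (h : IsIndepString ρ I) {i j : ι}
    (hi : i ∈ I) (hj : j ∈ I)
    (he : orbitRel (parabolic ρ {i}) α = orbitRel (parabolic ρ {j}) α) : i = j := by
  by_contra hij
  refine h.notMem_parabolic (S := {j}) (by simpa using hj) hi hij ?_
  suffices ρ i = ρ j from this ▸ mem_parabolic rfl
  refine FaithfulSMul.eq_of_smul_eq_smul fun x : α => ?_
  by_cases hx : ρ j • x = x
  · by_contra hne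
    exact hne (h.smul_eq_of_orbitRel_singleton_eq hj he.symm fun e => hne (e.trans hx.symm)).symm
  · exact h.smul_eq_of_orbitRel_singleton_eq hi he hx

lemma orbitCount_lt_max [Finite α] [FaithfulSMul G α] (h : IsIndepString ρ I) {S : Set ι}
    (hS : S ⊆ I) {i j : ι} (hi : i ∈ S) (hj : j ∈ S) (hij : i ≠ j) :
    orbitCount (parabolic ρ S) α <
      max (orbitCount (parabolic ρ {i}) α) (orbitCount (parabolic ρ {j}) α) := by
  by_contra! hle
  obtain ⟨hle_i, hle_j⟩ := max_le_iff.1 hle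
  refine hij (h.eq_of_orbitRel_singleton_eq (α := α) (hS hi) (hS hj) ?_)
  rw [orbitRel_eq_of_orbitCount_le (parabolic_mono (Set.singleton_subset_iff.2 hi)) hle_i,
    orbitRel_eq_of_orbitCount_le (parabolic_mono (Set.singleton_subset_iff.2 hj)) hle_j]

lemma card_add_orbitCount_le_of_card_le_two [Finite α] [FaithfulSMul G α]
    (h : IsIndepString ρ I) {S : Finset ι} (hS : ↑S ⊆ I) (hS2 : S.card ≤ 2) :
    S.card + orbitCount (parabolic ρ S) α ≤ Nat.card α := by
  obtain h0 | h1 | h2 : S.card = 0 ∨ S.card = 1 ∨ S.card = 2 := by omega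
  · rw [h0, zero_add]
    exact orbitCount_le_card _
  · obtain ⟨i, rfl⟩ := Finset.card_eq_one.1 h1
    have := h.orbitCount_singleton_lt (α := α) (hS (Finset.mem_coe.2 (Finset.mem_singleton_self i)))
    rw [Finset.coe_singleton, h1]
    omega
  · obtain ⟨i, j, hij, rfl⟩ := Finset.card_eq_two.1 h2
    have hi := h.orbitCount_singleton_lt (α := α) (hS (by simp : i ∈ _))
    have hj := h.orbitCount_singleton_lt (α := α) (hS (by simp : j ∈ _))
    have hlt := h.orbitCount_lt_max (α := α) hS (by simp : i ∈ _) (by simp : j ∈ _) hij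
    omega

lemma of_map {G' : Type*} [Group G'] (h : IsIndepString ρ I) {f : G' →* G}
    (hf : Function.Injective f) {σ : ι → G'} (hσ : ∀ i ∈ I, f (σ i) = ρ i) :
    IsIndepString σ I where
  mul_self i hi := hf (by rw [map_mul, hσ i hi, h.mul_self i hi, map_one])
  commute i hi l hl j hj hil hlj := hf (by
    rw [map_mul, map_mul, hσ i hi, hσ j hj]; exact h.commute i hi l hl j hj hil hlj)
  notMem i hi hmem := by
    refine h.notMem i hi ?_
    have := mem_map_of_mem f hmem
    rwa [MonoidHom.map_closure, Set.image_image, hσ i hi,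
      Set.image_congr fun l hl => hσ l hl.1] at this

lemma mono (h : IsIndepString ρ I) {V : Set ι} (hV : V ⊆ I) : IsIndepString ρ V where
  mul_self i hi := h.mul_self i (hV hi)
  commute i hi l hl j hj := h.commute i (hV hi) l (hV hl) j (hV hj)
  notMem i hi := h.notMem_parabolic (Set.sdiff_subset.trans hV) (hV hi) (by simp)

lemma exists_isPretransitive_orbit (h : IsIndepString ρ I) (x : α) :
    ∃ σ : ι → parabolic ρ I, IsIndepString σ I ∧
      IsPretransitive (parabolic σ I) (orbit (parabolic ρ I) x) := by
  classical
  let σ (i : ι) : parabolic ρ I := if hi : i ∈ I then ⟨ρ i, mem_parabolic hi⟩ else 1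
  have hσ (i : ι) (hi : i ∈ I) : (σ i : G) = ρ i := by simp [σ, hi]
  refine ⟨σ, h.of_map (subtype_injective _) hσ, ?_⟩
  have himage : σ '' I = (↑) ⁻¹' (ρ '' I) := by
    ext g
    constructor
    · rintro ⟨i, hi, rfl⟩
      exact ⟨i, hi, (hσ i hi).symm⟩
    · rintro ⟨i, hi, hg⟩
      exact ⟨i, hi, Subtype.ext ((hσ i hi).trans hg)⟩
  have htop : parabolic σ I = ⊤ :=
    (congrArg Subgroup.closure himage).trans closure_closure_coe_preimage
  rw [htop]
  exact ⟨fun y z => (exists_smul_eq (parabolic ρ I) y z).imp' (⟨·, mem_top _⟩) fun _ => id⟩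

section RankBound

lemma exists_isSemiregularCore_of_Ioi [Nontrivial α] (h : IsIndepString ρ I)
    (ht : IsPretransitive (parabolic ρ I) α) {D : Finset ι} (hDI : ↑D ⊆ I)
    (hD : ∀ d ∈ D, IsPretransitive (parabolic ρ (I ∩ Set.Ioi d)) α ∧
      ¬ IsPretransitive (parabolic ρ (I ∩ Set.Iio d)) α) :
    ∃ P, IsSemiregularCore ρ I α D P := by
  obtain rfl | hne := D.eq_empty_or_nonempty
  · exact ⟨∅, IsSemiregularCore.empty ht⟩
  have hsub : (↑(D.erase (D.max' hne)) : Set ι) ⊆ I ∩ Set.Iio (D.max' hne) := fun i hi =>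
    ⟨hDI (Finset.mem_of_mem_erase hi), D.lt_max'_of_mem_erase_max' hne hi⟩
  have hmem := D.max'_mem hne
  refine ⟨_, IsSemiregularCore.erase Set.inter_subset_left ?_ (hD _ hmem).1
    (h.parabolic_le_centralizer (hDI hmem) hsub subset_rfl)
    (mt (isPretransitive_mono (parabolic_mono hsub)) (hD _ hmem).2)⟩
  exact Set.disjoint_left.2 fun i hi hi' => (hsub hi).2.not_gt hi'.2

lemma exists_isSemiregularCore_of_Iio [Nontrivial α] (h : IsIndepString ρ I)
    (ht : IsPretransitive (parabolic ρ I) α) {D : Finset ι} (hDI : ↑D ⊆ I)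
    (hD : ∀ d ∈ D, IsPretransitive (parabolic ρ (I ∩ Set.Iio d)) α ∧
      ¬ IsPretransitive (parabolic ρ (I ∩ Set.Ioi d)) α) :
    ∃ P, IsSemiregularCore ρ I α D P := by
  obtain rfl | hne := D.eq_empty_or_nonempty
  · exact ⟨∅, IsSemiregularCore.empty ht⟩
  have hsub : (↑(D.erase (D.min' hne)) : Set ι) ⊆ I ∩ Set.Ioi (D.min' hne) := fun i hi =>
    ⟨hDI (Finset.mem_of_mem_erase hi), D.min'_lt_of_mem_erase_min' hne hi⟩
  have hmem := D.min'_mem hne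
  refine ⟨_, IsSemiregularCore.erase Set.inter_subset_left ?_ (hD _ hmem).1
    (le_centralizer_iff.1 (h.parabolic_le_centralizer (hDI hmem) subset_rfl hsub))
    (mt (isPretransitive_mono (parabolic_mono hsub)) (hD _ hmem).2)⟩
  exact Set.disjoint_left.2 fun i hi hi' => (hsub hi).2.not_gt hi'.2

variable [Finite α] [FaithfulSMul G α]

lemma eq_empty_of_card_le_four [Nonempty α] (h : IsIndepString ρ I) {D P : Finset ι} (hD : ↑D ⊆ I)
    (hP : IsSemiregularCore ρ I α D P) (hα : Nat.card α ≤ 4) : P = ∅ := by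
  obtain ⟨T, hTI, hPT, hT, hcent⟩ := hP.exists_centralizer
  refine Finset.eq_empty_of_forall_notMem fun i hi => ?_
  have hiI : i ∈ I := hD (hP.subset hi)
  exact h.notMem_parabolic hTI hiI (Set.disjoint_left.1 hPT hi)
    (mem_of_mem_centralizer_of_card_le_four hT hα (hcent (mem_parabolic hi)) (h.mul_self i hiI))

lemma card_add_card_add_one_lt [Nontrivial α] (h : IsIndepString ρ I) {A B : Finset ι}
    (hA : ↑A ⊆ I) (hB : ↑B ⊆ I) (hdisj : Disjoint A B)
    (hAB : parabolic ρ A ≤ centralizer (parabolic ρ B : Set G))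
    (hAt : IsPretransitive (parabolic ρ A) α) (hBt : IsPretransitive (parabolic ρ B) α) :
    A.card + B.card + 1 < Nat.card α := by
  have : Finite G := .of_injective _ (MulAction.toPerm_injective (α := G) (β := α))
  have card_eq {S T : Finset ι} (hS : IsPretransitive (parabolic ρ S) α)
      (hT : IsPretransitive (parabolic ρ T) α)
      (hST : parabolic ρ S ≤ centralizer (parabolic ρ T : Set G)) :
      Nat.card (parabolic ρ S) = Nat.card α := by
    rw [← card_mul_orbitCount_of_le_centralizer hT hST, orbitCount_eq_one_iff.2 hS, mul_one]
  obtain ⟨a, ha⟩ : A.Nonempty := by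
    rw [Finset.nonempty_iff_ne_empty]
    rintro rfl
    exact not_isPretransitive_parabolic_empty (Finset.coe_empty (α := ι) ▸ hAt)
  have hAcard := card_eq hAt hBt hAB
  have hBcard := card_eq hBt hAt (le_centralizer_iff.1 hAB)
  have h5 : 5 ≤ Nat.card α := by
    by_contra! h4
    exact h.notMem_parabolic hB (hA ha) (Finset.disjoint_left.1 hdisj ha)
      (mem_of_mem_centralizer_of_card_le_four hBt (Nat.le_of_lt_succ h4) (hAB (mem_parabolic ha))
        (h.mul_self a (hA ha)))
  have h2 : 2 ∣ Nat.card α := by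
    rw [← hAcard, ← orderOf_eq_prime (p := 2) ((pow_two _).trans (h.mul_self a (hA ha)))
      (h.ne_one (hA ha))]
    exact Subgroup.orderOf_dvd_natCard _ (mem_parabolic ha)
  have h6 : 6 ≤ Nat.card α := by omega
  have hA2 := two_mul_add_two_le_of_two_pow_le h6 ((h.two_pow_card_le hA).trans_eq hAcard)
  have hB2 := two_mul_add_two_le_of_two_pow_le h6 ((h.two_pow_card_le hB).trans_eq hBcard)
  omega

lemma eq_empty_or_eq_singleton_of_card_le_two [Nonempty α] (h : IsIndepString ρ I)
    {D P : Finset ι} (hD : ↑D ⊆ I) (hP : IsSemiregularCore ρ I α D P)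
    (h2 : Nat.card (parabolic ρ P) ≤ 2) :
    P = ∅ ∨ ∃ i, P = {i} ∧ 2 * orbitCount (parabolic ρ {i}) α = Nat.card α ∧ 5 ≤ Nat.card α := by
  have : Finite G := .of_injective _ (MulAction.toPerm_injective (α := G) (β := α))
  refine P.eq_empty_or_nonempty.imp_right fun hne => ?_
  have hpow := h.two_pow_card_le ((Finset.coe_subset.2 hP.subset).trans hD)
  have hlt : P.card < 2 := P.card.lt_two_pow_self.trans_le (hpow.trans h2)
  have hpos := hne.card_pos
  have hone : P.card = 1 := by omega
  rw [hone, pow_one] at hpow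
  obtain ⟨i, rfl⟩ := Finset.card_eq_one.1 hone
  refine ⟨i, rfl, ?_, ?_⟩
  · rw [← hP.card_mul_orbitCount, le_antisymm h2 hpow, Finset.coe_singleton]
  · by_contra! h4
    exact hne.ne_empty (h.eq_empty_of_card_le_four hD hP (Nat.le_of_lt_succ h4))

lemma card_add_card_add_orbitCount_le_of_three_le [Nonempty α] (h : IsIndepString ρ I)
    {D E P Q : Finset ι} (hD : ↑D ⊆ I) (hE : ↑E ⊆ I) (hP : IsSemiregularCore ρ I α D P)
    (hQ : IsSemiregularCore ρ I α E Q) (h3 : 3 ≤ Nat.card (parabolic ρ P))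
    (hQP : Nat.card (parabolic ρ Q) ≤ Nat.card (parabolic ρ P)) :
    D.card + E.card + orbitCount (parabolic ρ (D ∪ E)) α ≤ Nat.card α := by
  have : Finite G := .of_injective _ (MulAction.toPerm_injective (α := G) (β := α))
  have hPpow := h.two_pow_card_le ((Finset.coe_subset.2 hP.subset).trans hD)
  have hQpow := h.two_pow_card_le ((Finset.coe_subset.2 hQ.subset).trans hE)
  have hDE : orbitCount (parabolic ρ (D ∪ E)) α ≤ orbitCount (parabolic ρ P) α :=
    orbitCount_anti (parabolic_mono
      ((Finset.coe_subset.2 hP.subset).trans Set.subset_union_left))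
  have hmul := add_add_two_add_le_mul h3 hPpow (hQpow.trans hQP)
    (two_le_orbitCount hP.not_isPretransitive) hDE
  have hDP := hP.card_le
  have hEQ := hQ.card_le
  rw [hP.card_mul_orbitCount] at hmul
  omega

lemma card_add_card_add_orbitCount_le_of_le_two [Nonempty α] (h : IsIndepString ρ I)
    {D E P Q : Finset ι} (hD : ↑D ⊆ I) (hE : ↑E ⊆ I) (hDE : Disjoint D E)
    (hP : IsSemiregularCore ρ I α D P) (hQ : IsSemiregularCore ρ I α E Q)
    (hP2 : Nat.card (parabolic ρ P) ≤ 2) (hQ2 : Nat.card (parabolic ρ Q) ≤ 2) :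
    D.card + E.card + orbitCount (parabolic ρ (D ∪ E)) α ≤ Nat.card α := by
  have hDEI : (D ∪ E : Set ι) ⊆ I := Set.union_subset hD hE
  have orbitCount_le {i : ι} (hi : i ∈ (D ∪ E : Set ι)) :
      orbitCount (parabolic ρ (D ∪ E)) α ≤ orbitCount (parabolic ρ {i}) α :=
    orbitCount_anti (parabolic_mono (Set.singleton_subset_iff.2 hi))
  have hDP := hP.card_le
  have hEQ := hQ.card_le
  obtain rfl | ⟨i, rfl, hi, h5⟩ := h.eq_empty_or_eq_singleton_of_card_le_two hD hP hP2 <;>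
    obtain rfl | ⟨j, rfl, hj, h5'⟩ := h.eq_empty_or_eq_singleton_of_card_le_two hE hQ hQ2 <;>
    simp only [Finset.card_empty, Finset.card_singleton] at hDP hEQ
  · rw [← Finset.card_union_of_disjoint hDE]
    rw [← Finset.coe_union] at hDEI ⊢
    refine h.card_add_orbitCount_le_of_card_le_two hDEI ?_
    rw [Finset.card_union_of_disjoint hDE]
    omega
  · have := orbitCount_le (Or.inr (hQ.subset (Finset.mem_singleton_self j)))
    omega
  · have := orbitCount_le (Or.inl (hP.subset (Finset.mem_singleton_self i)))
    omega
  · have hiD := hP.subset (Finset.mem_singleton_self i)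
    have hjE := hQ.subset (Finset.mem_singleton_self j)
    have := h.orbitCount_lt_max (α := α) hDEI (Or.inl hiD) (Or.inr hjE)
      (fun e => Finset.disjoint_left.1 hDE hiD (e ▸ hjE))
    omega

lemma card_add_card_add_orbitCount_le [Nonempty α] (h : IsIndepString ρ I) {D E P Q : Finset ι}
    (hD : ↑D ⊆ I) (hE : ↑E ⊆ I) (hDE : Disjoint D E) (hP : IsSemiregularCore ρ I α D P)
    (hQ : IsSemiregularCore ρ I α E Q) :
    D.card + E.card + orbitCount (parabolic ρ (D ∪ E)) α ≤ Nat.card α := by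
  by_cases h2 : Nat.card (parabolic ρ P) ≤ 2 ∧ Nat.card (parabolic ρ Q) ≤ 2
  · exact h.card_add_card_add_orbitCount_le_of_le_two hD hE hDE hP hQ h2.1 h2.2
  rcases le_total (Nat.card (parabolic ρ Q)) (Nat.card (parabolic ρ P)) with hle | hle
  · exact h.card_add_card_add_orbitCount_le_of_three_le hD hE hP hQ (by omega) hle
  · rw [add_comm D.card, Set.union_comm]
    exact h.card_add_card_add_orbitCount_le_of_three_le hE hD hQ hP (by omega) hle

lemma card_lt_of_forall_isPretransitive [Nontrivial α] {I : Finset ι} (h : IsIndepString ρ I)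
    (ht : IsPretransitive (parabolic ρ I) α)
    (hone : ∀ i ∈ I, IsPretransitive (parabolic ρ (I \ {i})) α →
      IsPretransitive (parabolic ρ (I ∩ Set.Iio i)) α ∨
        IsPretransitive (parabolic ρ (I ∩ Set.Ioi i)) α)
    (hboth : ∀ i ∈ I, ¬ (IsPretransitive (parabolic ρ (I ∩ Set.Iio i)) α ∧
      IsPretransitive (parabolic ρ (I ∩ Set.Ioi i)) α)) :
    I.card < Nat.card α := by
  classical
  let D : Finset ι := {i ∈ I | IsPretransitive (parabolic ρ (I ∩ Set.Ioi i)) α}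
  let E : Finset ι := {i ∈ I | IsPretransitive (parabolic ρ (I ∩ Set.Iio i)) α}
  have hDI : D ⊆ I := I.filter_subset _
  have hEI : E ⊆ I := I.filter_subset _
  have hDE : Disjoint D E := Finset.disjoint_filter.2 fun i hi hgt hlt => hboth i hi ⟨hlt, hgt⟩
  have hcore : D ∪ E ⊆ I := Finset.union_subset hDI hEI
  obtain ⟨P, hP⟩ := h.exists_isSemiregularCore_of_Ioi ht (Finset.coe_subset.2 hDI) fun d hd =>
    have hd := Finset.mem_filter.1 hd
    ⟨hd.2, fun hlt => hboth d hd.1 ⟨hlt, hd.2⟩⟩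
  obtain ⟨Q, hQ⟩ := h.exists_isSemiregularCore_of_Iio ht (Finset.coe_subset.2 hEI) fun d hd =>
    have hd := Finset.mem_filter.1 hd
    ⟨hd.2, fun hgt => hboth d hd.1 ⟨hd.2, hgt⟩⟩
  have hrest : (I \ (D ∪ E)).card < orbitCount (parabolic ρ (D ∪ E)) α := by
    apply card_lt_orbitCount_parabolic
    · rwa [← Finset.coe_union, ← Finset.coe_union, Finset.union_sdiff_of_subset hcore]
    · intro i hi hti
      obtain ⟨hiI, hiDE⟩ := Finset.mem_sdiff.1 hi
      have hsub : (D ∪ E : Set ι) ∪ (↑(I \ (D ∪ E)) \ {i}) ⊆ I \ {i} := by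
        rw [← Finset.coe_union]
        exact Set.union_subset (Set.subset_sdiff_singleton (Finset.coe_subset.2 hcore) hiDE)
          (Set.sdiff_subset_sdiff_left (Finset.coe_subset.2 Finset.sdiff_subset))
      rcases hone i hiI (isPretransitive_mono (parabolic_mono hsub) hti) with hlt | hgt
      · exact hiDE (Finset.mem_union_right D (Finset.mem_filter.2 ⟨hiI, hlt⟩))
      · exact hiDE (Finset.mem_union_left E (Finset.mem_filter.2 ⟨hiI, hgt⟩))
  have hsmall := h.card_add_card_add_orbitCount_le (Finset.coe_subset.2 hDI)
    (Finset.coe_subset.2 hEI) hDE hP hQ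
  have hI := Finset.card_sdiff_add_card_eq_card hcore
  rw [Finset.card_union_of_disjoint hDE] at hI
  omega

lemma card_lt_of_forall_two_mul_card_add_one_le [Nontrivial α] {I : Finset ι}
    (h : IsIndepString ρ I) (ht : IsPretransitive (parabolic ρ I) α)
    (half : ∀ A ⊆ I, ∀ B : Finset ι, parabolic ρ A ≤ centralizer (parabolic ρ B : Set G) →
      IsPretransitive ↥(parabolic ρ A ⊔ parabolic ρ B) α → ¬ IsPretransitive (parabolic ρ A) α →
      2 * (A.card + 1) ≤ Nat.card α) :
    I.card < Nat.card α := by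
  have hlt (i : ι) : ((I.filter (· < i) : Finset ι) : Set ι) = ↑I ∩ Set.Iio i := by ext; simp
  have hgt (i : ι) : ((I.filter (i < ·) : Finset ι) : Set ι) = ↑I ∩ Set.Ioi i := by ext; simp
  have hcent (i : ι) (hi : i ∈ I) := h.parabolic_le_centralizer hi (hlt i).subset (hgt i).subset
  by_cases hboth : ∃ i ∈ I, IsPretransitive (parabolic ρ (I ∩ Set.Iio i)) α ∧
      IsPretransitive (parabolic ρ (I ∩ Set.Ioi i)) α
  · obtain ⟨i, hi, hti⟩ := hboth
    rw [← hlt, ← hgt] at hti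
    rw [← card_filter_lt_add_card_filter_gt_add_one hi]
    exact h.card_add_card_add_one_lt (I.filter_subset _) (I.filter_subset _)
      (Finset.disjoint_filter.2 fun l _ hl hl' => hl.not_gt hl') (hcent i hi) hti.1 hti.2
  by_cases hone : ∀ i ∈ I, IsPretransitive (parabolic ρ (I \ {i})) α →
      IsPretransitive (parabolic ρ (I ∩ Set.Iio i)) α ∨
        IsPretransitive (parabolic ρ (I ∩ Set.Ioi i)) α
  · exact h.card_lt_of_forall_isPretransitive ht hone fun i hi hti => hboth ⟨i, hi, hti⟩
  · push Not at hone
    obtain ⟨i, hi, hti, hnlt, hngt⟩ := hone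
    rw [← inter_Iio_union_inter_Ioi, parabolic_union] at hti
    rw [← hlt] at hnlt hti
    rw [← hgt] at hngt hti
    have hleft := half _ (I.filter_subset _) _ (hcent i hi) hti hnlt
    have hright := half _ (I.filter_subset _) _ (le_centralizer_iff.1 (hcent i hi))
      (sup_comm (parabolic ρ _) _ ▸ hti) hngt
    have := card_filter_lt_add_card_filter_gt_add_one hi
    omega

theorem card_lt_of_isPretransitive [Nonempty α] {I : Finset ι} (h : IsIndepString ρ I)
    (ht : IsPretransitive (parabolic ρ I) α) : I.card < Nat.card α := by
  induction hn : Nat.card α using Nat.strong_induction_on generalizing G α I with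
  | h n ih =>
  subst hn
  obtain _ | _ := subsingleton_or_nontrivial α
  · have hI : I = ∅ := Finset.eq_empty_of_forall_notMem fun i hi =>
      h.ne_one hi (FaithfulSMul.eq_of_smul_eq_smul fun x : α => Subsingleton.elim _ _)
    rw [hI, Finset.card_empty]
    exact Nat.card_pos
  refine h.card_lt_of_forall_two_mul_card_add_one_le ht fun A hA B hAB hABt hAt => ?_
  obtain ⟨x⟩ := ‹Nonempty α›
  have hcard := two_mul_ncard_orbit_le (sup_le_normalizer_of_le_centralizer hAB) hABt hAt x
  have := faithfulSMul_orbit hAB hABt x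
  obtain ⟨σ, hσ, hσt⟩ := (h.mono (Finset.coe_subset.2 hA)).exists_isPretransitive_orbit x
  have := (nonempty_orbit (M := parabolic ρ A) x).to_subtype
  rw [← Nat.card_coe_set_eq] at hcard
  have hpos : 0 < Nat.card (orbit (parabolic ρ A) x) := Nat.card_pos
  have := ih _ (by omega) hσ hσt rfl
  omega

lemma card_lt_ncard_orbit {A : Finset ι} (h : IsIndepString ρ A) {K : Subgroup G}
    (hAK : parabolic ρ A ≤ centralizer (K : Set G))
    (hAKt : IsPretransitive ↥(parabolic ρ A ⊔ K) α) (x : α) :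
    A.card < (orbit (parabolic ρ A) x).ncard := by
  obtain ⟨σ, hσ, hσt⟩ := h.exists_isPretransitive_orbit x
  have := faithfulSMul_orbit hAK hAKt x
  have := (nonempty_orbit (M := parabolic ρ A) x).to_subtype
  exact (hσ.card_lt_of_isPretransitive hσt).trans_eq (Nat.card_coe_set_eq _)

end RankBound

end IsIndepString

lemma IsIndepString.of_isSggi_of_isIndependent {n r : ℕ} {ρ : Fin r → Equiv.Perm (Fin n)}
    (hsggi : IsSggi ρ) (hind : IsIndependent ρ) : IsIndepString ρ Set.univ where
  mul_self i _ := by rw [← pow_two, ← hsggi.1 i, pow_orderOf_eq_one]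
  commute i _ l _ j _ hil hlj := by
    have hi : ρ i * ρ i = 1 := by rw [← pow_two, ← hsggi.1 i, pow_orderOf_eq_one]
    have hj : ρ j * ρ j = 1 := by rw [← pow_two, ← hsggi.1 j, pow_orderOf_eq_one]
    have hij : (ρ i * ρ j) ^ 2 = 1 := hsggi.2 i j (by rw [lt_abs]; omega)
    rw [pow_two, mul_eq_one_iff_eq_inv, mul_inv_rev, inv_eq_of_mul_eq_one_left hi,
      inv_eq_of_mul_eq_one_left hj] at hij
    exact hij
  notMem i _ hi := hind i (parabolic_mono (fun _ hl => hl.2) hi)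

theorem stmt1_general {ι G α : Type*} [LinearOrder ι] [Fintype ι] [Group G] [MulAction G α]
    [Finite α] [FaithfulSMul G α] {ρ : ι → G} (h : IsIndepString ρ Set.univ) {j : ι}
    (hj : IsPretransitive (parabolic ρ {j}ᶜ) α)
    (hmax : ∀ l > j, ¬ IsPretransitive (parabolic ρ {l}ᶜ) α) {k : ℕ}
    (horb : ∀ x : α, (orbit (parabolic ρ (Set.Iio j)) x).ncard = k) :
    (∀ g ∈ parabolic ρ {j}ᶜ, ∀ x : α, (g • ·) '' orbit (parabolic ρ (Set.Iio j)) x =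
      orbit (parabolic ρ (Set.Iio j)) (g • x)) ∧
    Fintype.card ι - 1 ≤ (k - 1) + (Nat.card α / k - 1) := by
  have hcent : parabolic ρ (Set.Iio j) ≤ centralizer (parabolic ρ (Set.Ioi j) : Set G) :=
    h.parabolic_le_centralizer (Set.mem_univ j) (by simp) (by simp)
  have hsup : parabolic ρ {j}ᶜ = parabolic ρ (Set.Iio j) ⊔ parabolic ρ (Set.Ioi j) := by
    rw [← Set.Iio_union_Ioi, parabolic_union]
  have hV : ((Finset.univ.filter (· < j) : Finset ι) : Set ι) = Set.Iio j := by ext; simp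
  have hW : ((Finset.univ.filter (j < ·) : Finset ι) : Set ι) = Set.Ioi j := by ext; simp
  refine ⟨fun g hg => image_orbit_of_mem_normalizer
    (sup_le_normalizer_of_le_centralizer hcent (hsup ▸ hg)), ?_⟩
  have : Nonempty α := not_isEmpty_iff.1 fun _ =>
    h.ne_one (Set.mem_univ j) (FaithfulSMul.eq_of_smul_eq_smul (α := α) isEmptyElim)
  obtain ⟨x⟩ := ‹Nonempty α›
  have hbelow : (Finset.univ.filter (· < j)).card < k := by
    rw [← horb x, ← hV]
    rw [← hV] at hcent hsup
    exact (h.mono (Set.subset_univ _)).card_lt_ncard_orbit hcent (hsup ▸ hj) x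
  have habove : (Finset.univ.filter (j < ·)).card < orbitCount (parabolic ρ (Set.Iio j)) α := by
    refine card_lt_orbitCount_parabolic ?_ fun l hl htl => ?_
    · rwa [hW, Set.Iio_union_Ioi]
    · have hl := (Finset.mem_filter.1 hl).2
      refine hmax l hl (isPretransitive_mono (parabolic_mono ?_) htl)
      exact Set.union_subset (fun i hi => (hi.trans hl).ne) fun i hi => hi.2
  rw [← mul_orbitCount_eq_card horb, Nat.mul_div_cancel_left _ (by omega)]
  have hcard := card_filter_lt_add_card_filter_gt_add_one (Finset.mem_univ j)
  rw [Finset.card_univ] at hcard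
  omega

theorem stmt1 {n r k m : ℕ} (ρ : Fin r → Equiv.Perm (Fin n))
    (hsggi : IsSggi ρ) (hind : IsIndependent ρ)
    -- G_{r-1} is intransitive
    (hlast : ¬ MulAction.IsPretransitive
      ↥(Subgroup.closure (ρ '' {l | (l : ℕ) ≠ r - 1})) (Fin n))
    -- j ∉ {0, r-1} and G_j is transitive
    (j : Fin r) (hj0 : (j : ℕ) ≠ 0) (hjlast : (j : ℕ) ≠ r - 1)
    (hjtrans : MulAction.IsPretransitive
      ↥(Subgroup.closure (ρ '' {l | l ≠ j})) (Fin n))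
    -- j is the largest such index
    (hjmax : ∀ l : Fin r, (j : ℕ) < (l : ℕ) → (l : ℕ) ≤ r - 2 →
      ¬ MulAction.IsPretransitive
        ↥(Subgroup.closure (ρ '' {l' | l' ≠ l})) (Fin n))
    -- every orbit of G_{<j} has exactly k elements
    (horb : ∀ x : Fin n,
      (MulAction.orbit ↥(Subgroup.closure (ρ '' {l | (l : ℕ) < (j : ℕ)})) x).ncard = k)
    (hm : m = n / k) :
    (∀ g ∈ Subgroup.closure (ρ '' {l | l ≠ j}), ∀ x : Fin n,
      ∃ y : Fin n,
        (⇑g) '' (MulAction.orbit ↥(Subgroup.closure (ρ '' {l | (l : ℕ) < (j : ℕ)})) x) =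
          MulAction.orbit ↥(Subgroup.closure (ρ '' {l | (l : ℕ) < (j : ℕ)})) y) ∧
    r - 1 ≤ (k - 1) + (m - 1) := by
  have hmax (l : Fin r) (hl : j < l) :
      ¬ MulAction.IsPretransitive (parabolic ρ {l}ᶜ) (Fin n) := by
    rcases eq_or_ne (l : ℕ) (r - 1) with hl' | hl'
    · rwa [show ({l}ᶜ : Set (Fin r)) =
        {i : Fin r | (i : ℕ) ≠ r - 1} by ext; simp [Fin.ext_iff, hl']]
    · exact hjmax l hl (by omega)
  have h := IsIndepString.of_isSggi_of_isIndependent hsggi hind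
  obtain ⟨himage, hrank⟩ := stmt1_general h hjtrans hmax horb
  rw [Fintype.card_fin, Nat.card_fin, ← hm] at hrank
  exact ⟨fun g hg x => ⟨g x, himage g hg x⟩, hrank⟩
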